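/- Let ψ be a positive probability density on (0,∞), let f and g be non-negative measurable functions with ∫₀^∞ f(x) dx < ∞ and ∫₀^∞ g(x) dx < ∞, and let α, β > 0. Then D(αf + βg | ψ) < ∞ if and only if D(f | ψ) < ∞ and D(g | ψ) < ∞. -/

import Mathlib

open MeasureTheory Set
open scoped ENNReal

/-- `L x = x * log x` (with `L 0 = 0`, automatic since `Real.log 0 = 0`). -/
noncomputable def L (x : ℝ) : ℝ := x * Real.log x

/-- The relative entropy `D(f | ψ) = ∫₀^∞ L (f x / ψ x) * ψ x dx`, with values in
`(-∞, ∞]`, realized in `EReal`.  Since `L t ≥ -e⁻¹` for `t ≥ 0`, for a probability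
density `ψ` on `(0,∞)` the integrand shifted by `e⁻¹ * ψ` is nonnegative, so this
is faithfully computed by a Lebesgue integral shifted back by `e⁻¹`. -/
noncomputable def relEnt (f ψ : ℝ → ℝ) : EReal :=
  ((∫⁻ x in Ioi (0 : ℝ),
      ENNReal.ofReal (L (f x / ψ x) * ψ x + Real.exp (-1) * ψ x) : ℝ≥0∞) : EReal)
    - ((Real.exp (-1) : ℝ) : EReal)

/- On the finite measure `ν = ψ dμ`, with `F = f / ψ` and `G = g / ψ`, the claim is that
`L ∘ (α F + β G)` is integrable iff `L ∘ F` and `L ∘ G` are. Since `x - 1 ≤ L x`, integrability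
of `L ∘ F` forces that of `F`. Hence `L (a * x) = a * L x + L a * x` disposes of the coefficients,
and `L u + L v ≤ L (u + v) ≤ L u + L v + log 2 * (u + v)` settles the case `α = β = 1`. -/

section EntropyFunction

lemma continuous_L : Continuous L := Real.continuous_mul_log

lemma convexOn_L : ConvexOn ℝ (Ici 0) L := Real.convexOn_mul_log

lemma L_mul_eq (x y : ℝ) : L (x * y) = x * L y + L x * y := by
  rcases eq_or_ne x 0 with rfl | hx
  · simp [L]
  rcases eq_or_ne y 0 with rfl | hy
  · simp [L]
  rw [L, L, L, Real.log_mul hx hy]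
  ring

lemma sub_one_le_L {x : ℝ} (hx : 0 ≤ x) : x - 1 ≤ L x := Real.self_sub_one_le_mul_log hx

lemma neg_exp_neg_one_le_L {x : ℝ} (hx : 0 ≤ x) : -Real.exp (-1) ≤ L x := by
  -- `x - 1 ≤ L x` is sharp at `1`; rescaling by `e` moves the contact point to the minimizer `e⁻¹`.
  have h : Real.exp 1 * x - 1 ≤ Real.exp 1 * L x + Real.exp 1 * x := by
    calc Real.exp 1 * x - 1
        ≤ L (Real.exp 1 * x) := sub_one_le_L (mul_nonneg (Real.exp_pos 1).le hx)
      _ = Real.exp 1 * L x + Real.exp 1 * x := by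
        rw [L_mul_eq, show L (Real.exp 1) = Real.exp 1 by rw [L, Real.log_exp, mul_one]]
  rw [Real.exp_neg, neg_le, inv_eq_one_div, le_div_iff₀' (Real.exp_pos 1)]
  linarith

lemma L_add_L_le_L_add {u v : ℝ} (hu : 0 ≤ u) (hv : 0 ≤ v) : L u + L v ≤ L (u + v) := by
  have mul_log_le {a b : ℝ} (ha : 0 ≤ a) (hab : a ≤ b) : a * Real.log a ≤ a * Real.log b := by
    rcases ha.eq_or_lt with rfl | ha
    · simp
    · gcongr
  calc L u + L v
      ≤ u * Real.log (u + v) + v * Real.log (u + v) :=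
        add_le_add (mul_log_le hu (by linarith)) (mul_log_le hv (by linarith))
    _ = L (u + v) := (add_mul _ _ _).symm

lemma L_add_le {u v : ℝ} (hu : 0 ≤ u) (hv : 0 ≤ v) :
    L (u + v) ≤ L u + L v + Real.log 2 * (u + v) := by
  have midpoint : L (2⁻¹ * (2 * u) + 2⁻¹ * (2 * v)) ≤ 2⁻¹ * L (2 * u) + 2⁻¹ * L (2 * v) :=
    convexOn_L.2 (mem_Ici.2 (by positivity)) (mem_Ici.2 (by positivity))
      (by norm_num) (by norm_num) (by norm_num)
  calc L (u + v)
      = L (2⁻¹ * (2 * u) + 2⁻¹ * (2 * v)) := by ring_nf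
    _ ≤ 2⁻¹ * L (2 * u) + 2⁻¹ * L (2 * v) := midpoint
    _ = L u + L v + Real.log 2 * (u + v) := by
      rw [L_mul_eq, L_mul_eq, show L 2 = 2 * Real.log 2 from rfl]
      ring

end EntropyFunction

section FiniteMeasure

variable {X : Type*} [MeasurableSpace X] {ν : Measure X} [IsFiniteMeasure ν] {f g : X → ℝ}

lemma integrable_of_integrable_L (hf : AEMeasurable f ν) (hf0 : 0 ≤ᵐ[ν] f)
    (hLf : Integrable (fun x => L (f x)) ν) : Integrable f ν := by
  refine integrable_of_le_of_le hf.aestronglyMeasurable hf0 ?_ (integrable_zero X ℝ ν)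
    (hLf.add (integrable_const 1))
  filter_upwards [hf0] with x hx
  exact sub_le_iff_le_add.1 (sub_one_le_L hx)

lemma integrable_L_of_le {h : X → ℝ} (hf : AEMeasurable f ν) (hf0 : 0 ≤ᵐ[ν] f)
    (hh : Integrable h ν) (hle : ∀ᵐ x ∂ν, L (f x) ≤ h x) : Integrable (fun x => L (f x)) ν := by
  refine integrable_of_le_of_le (continuous_L.comp_aestronglyMeasurable hf.aestronglyMeasurable)
    ?_ hle (integrable_const (-Real.exp (-1))) hh
  filter_upwards [hf0] with x hx
  exact neg_exp_neg_one_le_L hx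

lemma integrable_L_const_mul (hf : AEMeasurable f ν) (hf0 : 0 ≤ᵐ[ν] f)
    (hLf : Integrable (fun x => L (f x)) ν) (c : ℝ) : Integrable (fun x => L (c * f x)) ν := by
  simp only [L_mul_eq]
  exact (hLf.const_mul c).add ((integrable_of_integrable_L hf hf0 hLf).const_mul (L c))

lemma integrable_L_const_mul_iff (hf : AEMeasurable f ν) (hf0 : 0 ≤ᵐ[ν] f) {c : ℝ} (hc : 0 < c) :
    Integrable (fun x => L (c * f x)) ν ↔ Integrable (fun x => L (f x)) ν := by
  refine ⟨fun hLcf => ?_, fun hLf => integrable_L_const_mul hf hf0 hLf c⟩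
  have hcf0 : 0 ≤ᵐ[ν] fun x => c * f x := hf0.mono fun x hx => mul_nonneg hc.le hx
  simpa only [inv_mul_cancel_left₀ hc.ne'] using
    integrable_L_const_mul (hf.const_mul c) hcf0 hLcf c⁻¹

lemma integrable_L_left_of_add (hf : AEMeasurable f ν) (hf0 : 0 ≤ᵐ[ν] f) (hg0 : 0 ≤ᵐ[ν] g)
    (hL : Integrable (fun x => L (f x + g x)) ν) : Integrable (fun x => L (f x)) ν := by
  refine integrable_L_of_le hf hf0 (hL.add (integrable_const (Real.exp (-1)))) ?_
  filter_upwards [hf0, hg0] with x hfx hgx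
  rw [Pi.add_apply]
  linarith [L_add_L_le_L_add hfx hgx, neg_exp_neg_one_le_L hgx]

lemma integrable_L_add_iff (hf : AEMeasurable f ν) (hf0 : 0 ≤ᵐ[ν] f)
    (hg : AEMeasurable g ν) (hg0 : 0 ≤ᵐ[ν] g) :
    Integrable (fun x => L (f x + g x)) ν ↔
      Integrable (fun x => L (f x)) ν ∧ Integrable (fun x => L (g x)) ν := by
  constructor
  · intro hL
    exact ⟨integrable_L_left_of_add hf hf0 hg0 hL,
      integrable_L_left_of_add hg hg0 hf0 (by simpa only [add_comm] using hL)⟩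
  · rintro ⟨hLf, hLg⟩
    have hfg : Integrable (fun x => f x + g x) ν :=
      (integrable_of_integrable_L hf hf0 hLf).add (integrable_of_integrable_L hg hg0 hLg)
    refine integrable_L_of_le (hf.add hg) (hf0.mp (hg0.mono fun x hgx hfx => add_nonneg hfx hgx))
      ((hLf.add hLg).add (hfg.const_mul (Real.log 2))) ?_
    filter_upwards [hf0, hg0] with x hfx hgx
    exact L_add_le hfx hgx

lemma integrable_L_mul_add_mul_iff (hf : AEMeasurable f ν) (hf0 : 0 ≤ᵐ[ν] f)
    (hg : AEMeasurable g ν) (hg0 : 0 ≤ᵐ[ν] g) {α β : ℝ} (hα : 0 < α) (hβ : 0 < β) :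
    Integrable (fun x => L (α * f x + β * g x)) ν ↔
      Integrable (fun x => L (f x)) ν ∧ Integrable (fun x => L (g x)) ν := by
  rw [integrable_L_add_iff (hf.const_mul α) (hf0.mono fun x hx => mul_nonneg hα.le hx)
      (hg.const_mul β) (hg0.mono fun x hx => mul_nonneg hβ.le hx),
    integrable_L_const_mul_iff hf hf0 hα, integrable_L_const_mul_iff hg hg0 hβ]

end FiniteMeasure

section RelativeEntropy

variable {X : Type*} [MeasurableSpace X] {μ : Measure X} {ψ f g : X → ℝ}

/-- The relative entropy `∫ L (f / ψ) * ψ ∂μ` of `f` with respect to a positive integrable density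
`ψ` on an arbitrary measure space. As in `relEnt`, the value in `(-∞, ∞]` is obtained by shifting
the integrand by `e⁻¹ * ψ`; here `ψ` may have any mass, so the shift back is `e⁻¹ * ∫ ψ ∂μ`. -/
noncomputable def relEntropy (μ : Measure X) (f ψ : X → ℝ) : EReal :=
  ((∫⁻ x, ENNReal.ofReal (L (f x / ψ x) * ψ x + Real.exp (-1) * ψ x) ∂μ : ℝ≥0∞) : EReal)
    - ((Real.exp (-1) * ∫ x, ψ x ∂μ : ℝ) : EReal)

lemma relEntropy_lt_top_iff_lintegral :
    relEntropy μ f ψ < ⊤ ↔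
      ∫⁻ x, ENNReal.ofReal (L (f x / ψ x) * ψ x + Real.exp (-1) * ψ x) ∂μ < ⊤ := by
  rw [relEntropy, EReal.sub_lt_iff (.inl (EReal.coe_ne_bot _)) (.inl (EReal.coe_ne_top _)),
    EReal.top_add_coe, ← EReal.coe_ennreal_top, EReal.coe_ennreal_lt_coe_ennreal_iff]

lemma relEntropy_lt_top_iff_integrable (hψ : Integrable ψ μ) (hψ0 : 0 ≤ᵐ[μ] ψ)
    (hf : AEMeasurable f μ) (hf0 : 0 ≤ᵐ[μ] f) :
    relEntropy μ f ψ < ⊤ ↔ Integrable (fun x => L (f x / ψ x) * ψ x) μ := by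
  have hmeas : AEMeasurable (fun x => L (f x / ψ x) * ψ x + Real.exp (-1) * ψ x) μ :=
    ((continuous_L.measurable.comp_aemeasurable (hf.div hψ.aemeasurable)).mul
      hψ.aemeasurable).add (hψ.aemeasurable.const_mul _)
  have hnonneg : 0 ≤ᵐ[μ] fun x => L (f x / ψ x) * ψ x + Real.exp (-1) * ψ x := by
    filter_upwards [hψ0, hf0] with x hψx hfx
    rw [← add_mul]
    exact mul_nonneg (neg_le_iff_add_nonneg.1 (neg_exp_neg_one_le_L (div_nonneg hfx hψx))) hψx
  rw [relEntropy_lt_top_iff_lintegral, lt_top_iff_ne_top,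
    lintegral_ofReal_ne_top_iff_integrable hmeas.aestronglyMeasurable hnonneg]
  exact integrable_add_iff_integrable_left' (hψ.const_mul _)

lemma integrable_withDensity_ofReal_iff {h : X → ℝ} (hψ : AEMeasurable ψ μ) (hψ0 : 0 ≤ᵐ[μ] ψ) :
    Integrable h (μ.withDensity fun x => ENNReal.ofReal (ψ x)) ↔
      Integrable (fun x => h x * ψ x) μ := by
  rw [integrable_withDensity_iff_integrable_smul₀' hψ.ennreal_ofReal
    (ae_of_all _ fun _ => ENNReal.ofReal_lt_top)]
  refine integrable_congr ?_
  filter_upwards [hψ0] with x hx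
  rw [ENNReal.toReal_ofReal hx, smul_eq_mul, mul_comm]

lemma relEntropy_lt_top_iff_integrable_withDensity (hψ : Integrable ψ μ) (hψ0 : 0 ≤ᵐ[μ] ψ)
    (hf : AEMeasurable f μ) (hf0 : 0 ≤ᵐ[μ] f) :
    relEntropy μ f ψ < ⊤ ↔
      Integrable (fun x => L (f x / ψ x)) (μ.withDensity fun x => ENNReal.ofReal (ψ x)) := by
  rw [relEntropy_lt_top_iff_integrable hψ hψ0 hf hf0,
    integrable_withDensity_ofReal_iff hψ.aemeasurable hψ0]

theorem stmt8_general (hψ : Integrable ψ μ) (hψpos : ∀ᵐ x ∂μ, 0 < ψ x)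
    (hf : AEMeasurable f μ) (hf0 : 0 ≤ᵐ[μ] f) (hg : AEMeasurable g μ) (hg0 : 0 ≤ᵐ[μ] g)
    {α β : ℝ} (hα : 0 < α) (hβ : 0 < β) :
    relEntropy μ (fun x => α * f x + β * g x) ψ < ⊤ ↔
      relEntropy μ f ψ < ⊤ ∧ relEntropy μ g ψ < ⊤ := by
  have hψ0 : 0 ≤ᵐ[μ] ψ := hψpos.mono fun _ => le_of_lt
  have hsum0 : 0 ≤ᵐ[μ] fun x => α * f x + β * g x := by
    filter_upwards [hf0, hg0] with x hfx hgx
    exact add_nonneg (mul_nonneg hα.le hfx) (mul_nonneg hβ.le hgx)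
  have : IsFiniteMeasure (μ.withDensity fun x => ENNReal.ofReal (ψ x)) :=
    isFiniteMeasure_withDensity_ofReal hψ.2
  have hac : μ.withDensity (fun x => ENNReal.ofReal (ψ x)) ≪ μ :=
    withDensity_absolutelyContinuous μ _
  have div_nonneg_ae {h : X → ℝ} (hh0 : 0 ≤ᵐ[μ] h) : 0 ≤ᵐ[μ] fun x => h x / ψ x :=
    hh0.mp (hψ0.mono fun x hψx hhx => div_nonneg hhx hψx)
  rw [relEntropy_lt_top_iff_integrable_withDensity hψ hψ0 (by fun_prop) hsum0,
    relEntropy_lt_top_iff_integrable_withDensity hψ hψ0 hf hf0,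
    relEntropy_lt_top_iff_integrable_withDensity hψ hψ0 hg hg0]
  simp only [add_div, mul_div_assoc]
  exact integrable_L_mul_add_mul_iff
    ((hf.div hψ.aemeasurable).mono_ac hac) (hac.ae_le (div_nonneg_ae hf0))
    ((hg.div hψ.aemeasurable).mono_ac hac) (hac.ae_le (div_nonneg_ae hg0)) hα hβ

lemma relEnt_eq_relEntropy {f ψ : ℝ → ℝ} (hψ : ∫ x in Ioi (0 : ℝ), ψ x = 1) :
    relEnt f ψ = relEntropy (volume.restrict (Ioi 0)) f ψ := by
  rw [relEnt, relEntropy, hψ, mul_one]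

end RelativeEntropy

theorem stmt8 (ψ : ℝ → ℝ) (hψmeas : Measurable ψ)
    (hψpos : ∀ x ∈ Ioi (0 : ℝ), 0 < ψ x)
    (hψint : IntegrableOn ψ (Ioi (0 : ℝ)))
    (hψprob : ∫ x in Ioi (0 : ℝ), ψ x = 1)
    (f g : ℝ → ℝ)
    (hfmeas : Measurable f) (hf0 : ∀ x, 0 ≤ f x)
    (hfint : IntegrableOn f (Ioi (0 : ℝ)))
    (hgmeas : Measurable g) (hg0 : ∀ x, 0 ≤ g x)
    (hgint : IntegrableOn g (Ioi (0 : ℝ)))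
    (α β : ℝ) (hα : 0 < α) (hβ : 0 < β) :
    relEnt (fun x => α * f x + β * g x) ψ < ⊤ ↔
      relEnt f ψ < ⊤ ∧ relEnt g ψ < ⊤ := by
  simp only [relEnt_eq_relEntropy hψprob]
  exact stmt8_general hψint (ae_restrict_of_forall_mem measurableSet_Ioi hψpos)
    hfmeas.aemeasurable (ae_of_all _ hf0) hgmeas.aemeasurable (ae_of_all _ hg0) hα hβ
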